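/- arXiv:2405.04329 — 2 statements merged into one kernel-verified Lean document; each statement's English description precedes it below -/
import Mathlib

section
/- Let p be a prime and N ≥ 0 an integer. Let M and M' be n × m matrices over the ring ℤ_p of p-adic integers such that every entry of M − M' is divisible by p^{N+1}. Let Q = ℤ_p^n / M·(ℤ_p^m) and Q' = ℤ_p^n / M'·(ℤ_p^m) be the cokernels of the associated ℤ_p-linear maps. If the torsion submodules of Q and of Q' are both annihilated by p^N, then Q and Q' are isomorphic as ℤ_p-modules. -/
/-!
If `r` kills the torsion of `F ⧸ J` and the quotient by that torsion is projective, then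
multiplication by `r` on `J` extends to a map `ρ : F → J`. Let `f - f' = r q d`, let `J` be the
range of `f`, and let `u` be a section of `f : P → J`. Then `1 - q (d ∘ u ∘ ρ)` agrees with
`f' ∘ u` on `J`, so it carries `range f` into `range f'`. For `q` in the Jacobson radical it is
surjective by Nakayama's lemma, so it induces a surjection of cokernels. Surjections in both
directions between finitely generated modules over a commutative ring are isomorphisms.
-/

section CommRing

variable {R F P : Type*} [CommRing R] [AddCommGroup F] [Module R F] [AddCommGroup P] [Module R P]

theorem exists_linearMap_eq_smul_of_projective_quotient (J : Submodule R F)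
    (T : Submodule R (F ⧸ J)) [Module.Projective R ((F ⧸ J) ⧸ T)] {r : R}
    (hT : ∀ y ∈ T, r • y = 0) :
    ∃ ρ : F →ₗ[R] J, ∀ x : J, ρ x = r • x := by
  let π : F →ₗ[R] (F ⧸ J) ⧸ T := T.mkQ ∘ₗ J.mkQ
  obtain ⟨s, hs⟩ := Module.projective_lifting_property π LinearMap.id
    (T.mkQ_surjective.comp J.mkQ_surjective)
  let e : F →ₗ[R] F := LinearMap.id - s ∘ₗ π
  have mkQ_e_mem (x : F) : J.mkQ (e x) ∈ T := by
    have hsπ : π (s (π x)) = π x := LinearMap.congr_fun hs (π x)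
    have hπe : π (e x) = 0 := (map_sub π x (s (π x))).trans (sub_eq_zero.2 hsπ.symm)
    exact (Submodule.Quotient.mk_eq_zero T).1 hπe
  have smul_e_mem (x : F) : (r • e) x ∈ J :=
    (Submodule.Quotient.mk_eq_zero J).1 (hT _ (mkQ_e_mem x))
  have e_eq (x : J) : e x = x := by
    have hπx : π x = 0 := by
      rw [LinearMap.comp_apply, J.mkQ_apply, (Submodule.Quotient.mk_eq_zero J).2 x.2, map_zero]
    rw [LinearMap.sub_apply, LinearMap.comp_apply, hπx, map_zero, sub_zero, LinearMap.id_apply]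
  exact ⟨(r • e).codRestrict J smul_e_mem, fun x ↦ Subtype.ext (congrArg (r • ·) (e_eq x))⟩

theorem surjective_id_sub_smul_of_mem_jacobson [Module.Finite R F] {q : R}
    (hq : q ∈ Ideal.jacobson (⊥ : Ideal R)) (h : F →ₗ[R] F) :
    Function.Surjective (LinearMap.id - q • h : F →ₗ[R] F) := by
  rw [← LinearMap.range_eq_top, eq_top_iff]
  refine Submodule.le_of_le_smul_of_le_jacobson_bot (I := Ideal.span {q}) Module.Finite.fg_top
    ((Ideal.span_singleton_le_iff_mem _).2 hq) fun x _ ↦ ?_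
  have hx : (LinearMap.id - q • h : F →ₗ[R] F) x + q • h x = x := sub_add_cancel x (q • h x)
  rw [← hx]
  exact Submodule.add_mem_sup (LinearMap.mem_range_self _ x)
    (Submodule.smul_mem_smul (Ideal.mem_span_singleton_self q) Submodule.mem_top)

theorem exists_surjective_quotient_range_of_sub_eq_smul [Module.Finite R F] {r q : R}
    (hq : q ∈ Ideal.jacobson (⊥ : Ideal R)) {f f' d : P →ₗ[R] F} (hd : f - f' = (r * q) • d)
    [Module.Projective R f.range] (T : Submodule R (F ⧸ f.range))
    [Module.Projective R ((F ⧸ f.range) ⧸ T)] (hT : ∀ y ∈ T, r • y = 0) :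
    ∃ φ : (F ⧸ f.range) →ₗ[R] (F ⧸ f'.range), Function.Surjective φ := by
  obtain ⟨u, hu⟩ := Module.projective_lifting_property f.rangeRestrict LinearMap.id
    f.surjective_rangeRestrict
  obtain ⟨ρ, hρ⟩ := exists_linearMap_eq_smul_of_projective_quotient f.range T hT
  let g : F →ₗ[R] F := LinearMap.id - q • (d ∘ₗ u ∘ₗ ρ)
  have g_eq (x : f.range) : g x = f' (u x) := by
    have hfu : f (u x) = x := congrArg Subtype.val (LinearMap.congr_fun hu x)
    have hfd : f (u x) - f' (u x) = (r * q) • d (u x) := LinearMap.congr_fun hd (u x)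
    calc g x = x - q • d (u (ρ x)) := rfl
      _ = f (u x) - (r * q) • d (u x) := by
        rw [hρ, map_smul, map_smul, smul_smul, mul_comm q r, hfu]
      _ = f' (u x) := by rw [← hfd, sub_sub_cancel]
  have range_le : f.range ≤ f'.range.comap g := fun x hx ↦ ⟨u ⟨x, hx⟩, (g_eq ⟨x, hx⟩).symm⟩
  have hg : Function.Surjective g := surjective_id_sub_smul_of_mem_jacobson hq _
  refine ⟨Submodule.mapQ _ _ g range_le, .of_comp (g := f.range.mkQ) ?_⟩
  exact f'.range.mkQ_surjective.comp hg

theorem nonempty_linearEquiv_of_surjective_of_surjective [Module.Finite R P] {φ : P →ₗ[R] F}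
    {ψ : F →ₗ[R] P} (hφ : Function.Surjective φ) (hψ : Function.Surjective ψ) :
    Nonempty (P ≃ₗ[R] F) :=
  have hinj : Function.Injective (ψ ∘ φ) :=
    OrzechProperty.injective_of_surjective_endomorphism (ψ ∘ₗ φ) (hψ.comp hφ)
  ⟨LinearEquiv.ofBijective φ ⟨hinj.of_comp, hφ⟩⟩

end CommRing

section PrincipalIdealRing

variable {R : Type*} [CommRing R] [IsDomain R] [IsPrincipalIdealRing R]
  {ι κ : Type*} [Finite ι] [Fintype κ]

theorem exists_surjective_quotient_range_mulVecLin {r q : R}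
    (hq : q ∈ Ideal.jacobson (⊥ : Ideal R)) {M M' : Matrix ι κ R}
    (hMM' : ∀ i j, r * q ∣ M i j - M' i j)
    (hM : ∀ x ∈ Submodule.torsion R ((ι → R) ⧸ M.mulVecLin.range), r • x = 0) :
    ∃ φ : ((ι → R) ⧸ M.mulVecLin.range) →ₗ[R] ((ι → R) ⧸ M'.mulVecLin.range),
      Function.Surjective φ := by
  choose D hD using hMM'
  have hsub : M - M' = (r * q) • Matrix.of D := Matrix.ext hD
  have hd : M.mulVecLin - M'.mulVecLin = (r * q) • (Matrix.of D).mulVecLin := by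
    refine LinearMap.ext fun v ↦ ?_
    simp only [LinearMap.sub_apply, LinearMap.smul_apply, Matrix.mulVecLin_apply,
      ← Matrix.sub_mulVec, hsub, Matrix.smul_mulVec]
  exact exists_surjective_quotient_range_of_sub_eq_smul hq hd (Submodule.torsion R _) hM

theorem statement9_general {r q : R} (hq : q ∈ Ideal.jacobson (⊥ : Ideal R)) {M M' : Matrix ι κ R}
    (hMM' : ∀ i j, r * q ∣ M i j - M' i j)
    (hM : ∀ x ∈ Submodule.torsion R ((ι → R) ⧸ M.mulVecLin.range), r • x = 0)
    (hM' : ∀ x ∈ Submodule.torsion R ((ι → R) ⧸ M'.mulVecLin.range), r • x = 0) :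
    Nonempty (((ι → R) ⧸ M.mulVecLin.range) ≃ₗ[R] ((ι → R) ⧸ M'.mulVecLin.range)) := by
  obtain ⟨φ, hφ⟩ := exists_surjective_quotient_range_mulVecLin hq hMM' hM
  obtain ⟨ψ, hψ⟩ := exists_surjective_quotient_range_mulVecLin hq
    (fun i j ↦ dvd_sub_comm.1 (hMM' i j)) hM'
  exact nonempty_linearEquiv_of_surjective_of_surjective hφ hψ

end PrincipalIdealRing

theorem padicInt_natCast_mem_jacobson_bot (p : ℕ) [Fact p.Prime] :
    (p : ℤ_[p]) ∈ Ideal.jacobson (⊥ : Ideal ℤ_[p]) := by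
  rw [IsLocalRing.jacobson_eq_maximalIdeal ⊥ bot_ne_top, PadicInt.maximalIdeal_eq_span_p]
  exact Ideal.mem_span_singleton_self _

theorem statement9 (p : ℕ) [Fact p.Prime] (N n m : ℕ)
    (M M' : Matrix (Fin n) (Fin m) ℤ_[p])
    (hMM' : ∀ i j, (p : ℤ_[p]) ^ (N + 1) ∣ (M i j - M' i j))
    (hQ : ∀ x ∈ Submodule.torsion ℤ_[p]
        ((Fin n → ℤ_[p]) ⧸ LinearMap.range (Matrix.mulVecLin M)),
      (p : ℤ_[p]) ^ N • x = 0)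
    (hQ' : ∀ x ∈ Submodule.torsion ℤ_[p]
        ((Fin n → ℤ_[p]) ⧸ LinearMap.range (Matrix.mulVecLin M')),
      (p : ℤ_[p]) ^ N • x = 0) :
    Nonempty (((Fin n → ℤ_[p]) ⧸ LinearMap.range (Matrix.mulVecLin M)) ≃ₗ[ℤ_[p]]
      ((Fin n → ℤ_[p]) ⧸ LinearMap.range (Matrix.mulVecLin M'))) :=
  statement9_general (padicInt_natCast_mem_jacobson_bot p)
    (fun i j ↦ (pow_succ (p : ℤ_[p]) N).symm.dvd.trans (hMM' i j)) hQ hQ'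
end

section
/- Let p be a prime and N ≥ 0 an integer. Let M and M' be n × m matrices over the ring ℤ_p of p-adic integers such that every entry of M − M' is divisible by p^N, and such that M and M' have equal rank (the dimension over the fraction field ℚ_p of the span of the columns). Let Q = ℤ_p^n / M·(ℤ_p^m) and Q' = ℤ_p^n / M'·(ℤ_p^m). If the torsion submodules of Q and of Q' are both annihilated by p^N, then Q and Q' are isomorphic as ℤ_p-modules. -/
/-!
Let `R` be a principal ideal domain (here `ℤ_[p]`), `a : R` nonzero (here `p ^ N`), and `Q` the
cokernel of a matrix over `R` whose torsion submodule `T` is killed by `a`. Then `Q ≅ R ^ r × T`,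
so `Q / aQ ≅ (R / a) ^ r × T`. Matrices congruent modulo `a` have isomorphic cokernels modulo `a`,
and matrices of equal rank have the same `r`, so it suffices to cancel `(R / a) ^ r` in
`(R / a) ^ r × T ≅ (R / a) ^ r × T'`. This is Evans' cancellation theorem: `R / a` is Artinian,
hence has stable range one, and a module whose endomorphism ring has this property can be
cancelled from direct sums.
-/

open scoped Pointwise

section StableRange

/-- Bass' stable range one condition on a ring, which makes modules with such an endomorphism ring
cancellable from direct sums. It is usually stated for unimodular rows `a * b + c * d = 1`; the
factor `d` is absorbed here into `c`. -/
def HasStableRangeOne (S : Type*) [Ring S] : Prop :=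
  ∀ a b c : S, a * b + c = 1 → ∃ y, IsUnit (a + c * y)

theorem HasStableRangeOne.of_surjective {S T : Type*} [Ring S] [Ring T] (hS : HasStableRangeOne S)
    (f : S →+* T) (hf : Function.Surjective f) : HasStableRangeOne T := by
  intro a b c h
  obtain ⟨a, rfl⟩ := hf a
  obtain ⟨b, rfl⟩ := hf b
  obtain ⟨y, hy⟩ := hS a b (1 - a * b) (add_sub_cancel _ _)
  obtain rfl : c = f (1 - a * b) := by rw [map_sub, map_one, map_mul, ← h, add_sub_cancel_left]
  exact ⟨f y, by simpa only [map_add, map_mul] using hy.map f⟩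

theorem hasStableRangeOne_of_finite_maximalSpectrum (S : Type*) [CommRing S]
    [Finite (MaximalSpectrum S)] : HasStableRangeOne S := by
  classical
  intro a b c h
  have coprime : Pairwise fun m m' : MaximalSpectrum S ↦ IsCoprime m.asIdeal m'.asIdeal :=
    fun m m' hne ↦ Ideal.isCoprime_of_isMaximal fun h ↦ hne (MaximalSpectrum.ext h)
  obtain ⟨y, hy⟩ := Ideal.exists_forall_sub_mem_ideal coprime
    fun m ↦ if a ∈ m.asIdeal then 1 else 0
  refine ⟨y, by_contra fun hunit ↦ ?_⟩
  obtain ⟨m, hm, hmem⟩ := exists_max_ideal_of_mem_nonunits hunit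
  have hym := hy ⟨m, hm⟩
  by_cases ha : a ∈ m
  · rw [if_pos ha] at hym
    refine hm.ne_top ((Ideal.eq_top_iff_one m).mpr ?_)
    have one_eq : 1 = a * b + ((a + c * y) - a - c * (y - 1)) := by linear_combination -h
    rw [one_eq]
    exact add_mem (m.mul_mem_right b ha) (sub_mem (sub_mem hmem ha) (m.mul_mem_left c hym))
  · rw [if_neg ha, sub_zero] at hym
    exact ha (by simpa using sub_mem hmem (m.mul_mem_left c hym))

theorem hasStableRangeOne_quotient_span_singleton {R : Type*} [CommRing R] [IsNoetherianRing R]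
    [Ring.KrullDimLE 1 R] {a : R} (ha : a ∈ nonZeroDivisors R) :
    HasStableRangeOne (R ⧸ Ideal.span {a}) := by
  have : IsArtinian R (R ⧸ Ideal.span {a}) :=
    (isFiniteLength_iff_isNoetherian_isArtinian.mp
      (isFiniteLength_quotient_span_singleton R ha)).2
  have : IsArtinianRing (R ⧸ Ideal.span {a}) := isArtinian_of_tower R inferInstance
  exact hasStableRangeOne_of_finite_maximalSpectrum _

theorem lmul_quotient_surjective {R : Type*} [CommRing R] (I : Ideal R) :
    Function.Surjective (Algebra.lmul R (R ⧸ I)) := fun f ↦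
  ⟨f 1, LinearMap.ext fun x ↦ by
    obtain ⟨r, rfl⟩ := Ideal.Quotient.mk_surjective x
    have mk_eq : Ideal.Quotient.mk I r = r • 1 := by rw [Algebra.smul_def, mul_one]; rfl
    rw [mk_eq, map_smul, map_smul, Algebra.coe_lmul_eq_mul, LinearMap.mul_apply', mul_one]⟩

theorem HasStableRangeOne.end_quotient {R : Type*} [CommRing R] {I : Ideal R}
    (h : HasStableRangeOne (R ⧸ I)) : HasStableRangeOne (Module.End R (R ⧸ I)) :=
  h.of_surjective (Algebra.lmul R (R ⧸ I)).toRingHom (lmul_quotient_surjective I)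

end StableRange

section Cancellation

variable {R A B C : Type*} [Ring R] [AddCommGroup A] [Module R A] [AddCommGroup B] [Module R B]
  [AddCommGroup C] [Module R C]

theorem nonempty_linearEquiv_of_bijective_fst_inl (e : (A × B) ≃ₗ[R] (A × C))
    (he : Function.Bijective fun x ↦ (e (x, 0)).1) : Nonempty (B ≃ₗ[R] C) := by
  let f : C →ₗ[R] B := LinearMap.snd R A B ∘ₗ e.symm.toLinearMap ∘ₗ LinearMap.inr R A C
  have f_injective : Function.Injective f := by
    refine (injective_iff_map_eq_zero f).mpr fun c (hc : (e.symm (0, c)).2 = 0) ↦ ?_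
    obtain ⟨x, hx⟩ : ∃ x, e (x, 0) = (0, c) :=
      ⟨(e.symm (0, c)).1, by rw [← hc, Prod.mk.eta, e.apply_symm_apply]⟩
    obtain rfl : x = 0 := he.1 <| by simp only [hx, Prod.mk_zero_zero, map_zero, Prod.fst_zero]
    rw [Prod.mk_zero_zero, map_zero] at hx
    exact congrArg Prod.snd hx.symm
  have f_surjective : Function.Surjective f := fun b ↦ by
    obtain ⟨x, hx : (e (x, 0)).1 = (e (0, b)).1⟩ := he.2 (e (0, b)).1
    have preimage : e (-x, b) = (0, (e (-x, b)).2) := by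
      have : ((-x, b) : A × B) = (0, b) - (x, 0) := by simp
      exact Prod.ext (by rw [this, map_sub, Prod.fst_sub, hx, sub_self]) rfl
    exact ⟨(e (-x, b)).2, congrArg Prod.snd (e.symm_apply_eq.mpr preimage.symm)⟩
  exact ⟨(LinearEquiv.ofBijective f ⟨f_injective, f_surjective⟩).symm⟩

theorem nonempty_linearEquiv_of_prod_left_cancel (hA : HasStableRangeOne (Module.End R A))
    (e : (A × B) ≃ₗ[R] (A × C)) : Nonempty (B ≃ₗ[R] C) := by
  let α : Module.End R A := LinearMap.fst R A C ∘ₗ e.toLinearMap ∘ₗ LinearMap.inl R A B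
  let β : B →ₗ[R] A := LinearMap.fst R A C ∘ₗ e.toLinearMap ∘ₗ LinearMap.inr R A B
  let α' : Module.End R A := LinearMap.fst R A B ∘ₗ e.symm.toLinearMap ∘ₗ LinearMap.inl R A C
  let γ' : A →ₗ[R] B := LinearMap.snd R A B ∘ₗ e.symm.toLinearMap ∘ₗ LinearMap.inl R A C
  have fst_apply (x : A) (b : B) : (e (x, b)).1 = α x + β b := by
    have : ((x, b) : A × B) = (x, 0) + (0, b) := by simp
    rw [this, map_add]; rfl
  have unimodular : α * α' + β ∘ₗ γ' = 1 := LinearMap.ext fun x ↦ by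
    have : (e (α' x, γ' x)).1 = x := congrArg Prod.fst (e.apply_symm_apply (x, 0))
    rwa [fst_apply] at this
  obtain ⟨y, hy⟩ := hA α α' (β ∘ₗ γ') unimodular
  -- The shear `(x, b) ↦ (x, b + γ' (y x))` turns the top left entry of `e` into a unit.
  let shear := (LinearEquiv.refl R A).skewProd (LinearEquiv.refl R B) (γ' ∘ₗ y)
  refine nonempty_linearEquiv_of_bijective_fst_inl (shear.trans e) ?_
  have entry (x : A) : ((shear.trans e) (x, 0)).1 = (α + β ∘ₗ γ' * y) x := by
    rw [LinearEquiv.trans_apply, LinearEquiv.skewProd_apply, fst_apply, map_zero, zero_add]; rfl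
  simpa only [entry] using (Module.End.isUnit_iff _).mp hy

variable (R A B) in
/-- Splits one factor `A` off `A ^ (n + 1) × B`, for cancelling the factors one at a time. -/
def consProdEquiv (n : ℕ) : (A × (Fin n → A) × B) ≃ₗ[R] ((Fin (n + 1) → A) × B) :=
  (LinearEquiv.prodAssoc R A (Fin n → A) B).symm ≪≫ₗ
    (Fin.consLinearEquiv R fun _ ↦ A).prodCongr (LinearEquiv.refl R B)

theorem nonempty_linearEquiv_of_pi_prod_left_cancel (hA : HasStableRangeOne (Module.End R A))
    (n : ℕ) (e : ((Fin n → A) × B) ≃ₗ[R] ((Fin n → A) × C)) : Nonempty (B ≃ₗ[R] C) := by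
  induction n with
  | zero => exact ⟨LinearEquiv.uniqueProd.symm ≪≫ₗ e ≪≫ₗ LinearEquiv.uniqueProd⟩
  | succ n ih =>
    obtain ⟨e'⟩ := nonempty_linearEquiv_of_prod_left_cancel hA
      (consProdEquiv R A B n ≪≫ₗ e ≪≫ₗ (consProdEquiv R A C n).symm)
    exact ih e'

end Cancellation

section QuotSMulTop

variable {R : Type*} [CommRing R] {a : R}

theorem nonempty_quotSMulTop_prod_pi_linearEquiv {T ι : Type*} [AddCommGroup T] [Module R T]
    (hT : ∀ t : T, a • t = 0) :
    Nonempty (QuotSMulTop a (T × (ι → R)) ≃ₗ[R] ((ι → R ⧸ Ideal.span {a}) × T)) := by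
  let f : T × (ι → R) →ₗ[R] (ι → R ⧸ Ideal.span {a}) × T :=
    ((LinearMap.compLeft (Submodule.mkQ (Ideal.span {a})) ι) ∘ₗ LinearMap.snd R T _).prod
      (LinearMap.fst R T _)
  have f_surjective : Function.Surjective f := fun ⟨x, t⟩ ↦ by
    obtain ⟨z, rfl⟩ := (Submodule.mkQ_surjective (Ideal.span {a})).comp_left x
    exact ⟨(t, z), rfl⟩
  have ker_f : a • (⊤ : Submodule R (T × (ι → R))) = LinearMap.ker f := by
    ext ⟨t, x⟩
    rw [LinearMap.mem_ker, Submodule.mem_smul_pointwise_iff_exists]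
    constructor
    · rintro ⟨⟨t', x'⟩, -, h⟩
      obtain ⟨rfl, rfl⟩ := Prod.mk.inj h
      refine Prod.ext (funext fun i ↦ ?_) (hT t')
      exact (Submodule.Quotient.mk_eq_zero _).mpr
        (Ideal.mem_span_singleton.mpr (dvd_mul_right a (x' i)))
    · intro h
      obtain ⟨hx, rfl : t = 0⟩ := Prod.mk.inj h
      have dvd (i : ι) : a ∣ x i := Ideal.mem_span_singleton.mp
        ((Submodule.Quotient.mk_eq_zero _).mp (congrFun hx i))
      choose z hz using dvd
      exact ⟨(0, z), trivial, Prod.ext (smul_zero a) (funext fun i ↦ (hz i).symm)⟩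
  exact ⟨Submodule.quotEquivOfEq _ _ ker_f ≪≫ₗ f.quotKerEquivOfSurjective f_surjective⟩

variable {P X : Type*} [AddCommGroup P] [Module R P] [AddCommGroup X] [Module R X]

theorem range_sup_smul_top_le_of_forall_sub_mem {f g : P →ₗ[R] X}
    (h : ∀ v, f v - g v ∈ a • (⊤ : Submodule R X)) :
    LinearMap.range f ⊔ a • ⊤ ≤ LinearMap.range g ⊔ a • ⊤ := by
  refine sup_le ?_ le_sup_right
  rintro _ ⟨v, rfl⟩
  rw [← add_sub_cancel (g v) (f v)]
  exact Submodule.add_mem_sup (LinearMap.mem_range_self g v) (h v)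

/-- Reducing `X / S` modulo `a` is dividing `X` by `S + aX`. -/
noncomputable def quotSMulTopQuotientEquiv (a : R) (S : Submodule R X) :
    QuotSMulTop a (X ⧸ S) ≃ₗ[R] X ⧸ (S ⊔ a • ⊤) :=
  Submodule.quotEquivOfEq _ _ (by
    rw [Submodule.map_pointwise_smul, Submodule.map_top, Submodule.range_mkQ]) ≪≫ₗ
    Submodule.quotientQuotientEquivQuotientSup S (a • ⊤)

theorem nonempty_quotSMulTop_coker_linearEquiv {f g : P →ₗ[R] X}
    (h : ∀ v, f v - g v ∈ a • (⊤ : Submodule R X)) :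
    Nonempty (QuotSMulTop a (X ⧸ LinearMap.range f) ≃ₗ[R]
      QuotSMulTop a (X ⧸ LinearMap.range g)) := by
  have sup_eq : LinearMap.range f ⊔ a • ⊤ = LinearMap.range g ⊔ a • ⊤ :=
    le_antisymm (range_sup_smul_top_le_of_forall_sub_mem h)
      (range_sup_smul_top_le_of_forall_sub_mem fun v ↦ by simpa using neg_mem (h v))
  exact ⟨quotSMulTopQuotientEquiv a _ ≪≫ₗ Submodule.quotEquivOfEq _ _ sup_eq ≪≫ₗ
    (quotSMulTopQuotientEquiv a _).symm⟩

end QuotSMulTop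

section PrincipalIdealDomain

open Module (finrank)
open Submodule (torsion)

variable {R : Type*} [CommRing R] [IsDomain R] [IsPrincipalIdealRing R] {Q Q' : Type*}
  [AddCommGroup Q] [Module R Q] [Module.Finite R Q]
  [AddCommGroup Q'] [Module R Q'] [Module.Finite R Q']

variable (R Q) in
theorem nonempty_linearEquiv_torsion_prod_pi :
    Nonempty (Q ≃ₗ[R] (torsion R Q × (Fin (finrank R Q) → R))) := by
  obtain ⟨lift, mkQ_comp_lift⟩ :=
    Module.projective_lifting_property (torsion R Q).mkQ LinearMap.id (torsion R Q).mkQ_surjective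
  have range_eq_ker : LinearMap.range (torsion R Q).subtype = LinearMap.ker (torsion R Q).mkQ := by
    rw [Submodule.range_subtype, Submodule.ker_mkQ]
  have finrank_eq : finrank R (Q ⧸ torsion R Q) = finrank R (Fin (finrank R Q) → R) := by
    rw [finrank_quotient_eq_of_le_torsion le_rfl, Module.finrank_fin_fun]
  let split :=
    lequivProdOfRightSplitExact (torsion R Q).injective_subtype range_eq_ker mkQ_comp_lift
  exact ⟨split.symm ≪≫ₗ
    (LinearEquiv.refl R _).prodCongr (LinearEquiv.ofFinrankEq _ _ finrank_eq)⟩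

theorem nonempty_quotSMulTop_linearEquiv_pi_prod_torsion {a : R}
    (hQ : ∀ x ∈ torsion R Q, a • x = 0) :
    Nonempty (QuotSMulTop a Q ≃ₗ[R]
      ((Fin (finrank R Q) → R ⧸ Ideal.span {a}) × torsion R Q)) := by
  obtain ⟨e⟩ := nonempty_linearEquiv_torsion_prod_pi R Q
  obtain ⟨e'⟩ := nonempty_quotSMulTop_prod_pi_linearEquiv (a := a) (T := torsion R Q)
    (ι := Fin (finrank R Q)) fun t ↦ Subtype.ext (hQ t t.2)
  exact ⟨QuotSMulTop.congr a e ≪≫ₗ e'⟩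

theorem nonempty_linearEquiv_of_quotSMulTop_linearEquiv {a : R} (ha : a ≠ 0)
    (hfinrank : finrank R Q = finrank R Q') (hQ : ∀ x ∈ torsion R Q, a • x = 0)
    (hQ' : ∀ x ∈ torsion R Q', a • x = 0) (e : QuotSMulTop a Q ≃ₗ[R] QuotSMulTop a Q') :
    Nonempty (Q ≃ₗ[R] Q') := by
  obtain ⟨split⟩ := nonempty_linearEquiv_torsion_prod_pi R Q
  obtain ⟨split'⟩ := nonempty_linearEquiv_torsion_prod_pi R Q'
  obtain ⟨reduce⟩ := nonempty_quotSMulTop_linearEquiv_pi_prod_torsion hQ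
  obtain ⟨reduce'⟩ := nonempty_quotSMulTop_linearEquiv_pi_prod_torsion hQ'
  have stable : HasStableRangeOne (Module.End R (R ⧸ Ideal.span {a})) :=
    (hasStableRangeOne_quotient_span_singleton (mem_nonZeroDivisors_of_ne_zero ha)).end_quotient
  rw [hfinrank] at split reduce
  obtain ⟨torsionEquiv⟩ :=
    nonempty_linearEquiv_of_pi_prod_left_cancel stable _ (reduce.symm ≪≫ₗ e ≪≫ₗ reduce')
  exact ⟨split ≪≫ₗ torsionEquiv.prodCongr (LinearEquiv.refl R _) ≪≫ₗ split'.symm⟩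

end PrincipalIdealDomain

section MatrixCokernel

variable {R ι κ : Type*} [CommRing R] [Fintype κ]

theorem rank_map_algebraMap [Finite ι] (K : Type*) [CommRing K] [Algebra R K] [IsFractionRing R K]
    (M : Matrix ι κ R) : (M.map (algebraMap R K)).rank = M.rank := by
  let f : (ι → R) →ₗ[R] (ι → K) := LinearMap.pi fun i ↦ Algebra.linearMap R K ∘ₗ LinearMap.proj i
  have : IsLocalizedModule (nonZeroDivisors R) f := inferInstance
  have range_eq : LinearMap.range (M.map (algebraMap R K)).mulVecLin =
      (LinearMap.range M.mulVecLin).localized' K (nonZeroDivisors R) f := by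
    rw [Matrix.range_mulVecLin, Matrix.range_mulVecLin, Submodule.localized'_span,
      ← Set.range_comp]
    rfl
  rw [Matrix.rank, range_eq, IsLocalization.finrank_eq (R := R) K (nonZeroDivisors R) le_rfl,
    IsLocalizedModule.finrank_eq (nonZeroDivisors R)
      ((LinearMap.range M.mulVecLin).toLocalized' K (nonZeroDivisors R) f) le_rfl, Matrix.rank]

theorem finrank_coker_add_rank [Finite ι] [IsDomain R] (M : Matrix ι κ R) :
    Module.finrank R ((ι → R) ⧸ LinearMap.range M.mulVecLin) + M.rank = Nat.card ι := by
  have := Fintype.ofFinite ι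
  rw [Matrix.rank, Submodule.finrank_quotient_add_finrank, Module.finrank_fintype_fun_eq_card,
    Nat.card_eq_fintype_card]

theorem mulVecLin_sub_mem_smul_top {a : R} {M M' : Matrix ι κ R}
    (h : ∀ i j, a ∣ M i j - M' i j) (v : κ → R) :
    M.mulVecLin v - M'.mulVecLin v ∈ a • (⊤ : Submodule R (ι → R)) := by
  choose E hE using h
  have sub_eq : M - M' = a • Matrix.of E := Matrix.ext hE
  rw [Matrix.mulVecLin_apply, Matrix.mulVecLin_apply, ← Matrix.sub_mulVec, sub_eq,
    Matrix.smul_mulVec]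
  exact Submodule.smul_mem_pointwise_smul _ a ⊤ trivial

end MatrixCokernel

theorem statement10_general {R K ι κ : Type*} [CommRing R] [IsDomain R] [IsPrincipalIdealRing R]
    [Field K] [Algebra R K] [IsFractionRing R K] [Finite ι] [Fintype κ] (a : R)
    (M M' : Matrix ι κ R) (hMM' : ∀ i j, a ∣ M i j - M' i j)
    (hrank : (M.map (algebraMap R K)).rank = (M'.map (algebraMap R K)).rank)
    (hQ : ∀ x ∈ Submodule.torsion R ((ι → R) ⧸ LinearMap.range M.mulVecLin), a • x = 0)
    (hQ' : ∀ x ∈ Submodule.torsion R ((ι → R) ⧸ LinearMap.range M'.mulVecLin), a • x = 0) :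
    Nonempty (((ι → R) ⧸ LinearMap.range M.mulVecLin) ≃ₗ[R]
      ((ι → R) ⧸ LinearMap.range M'.mulVecLin)) := by
  obtain rfl | ha := eq_or_ne a 0
  · obtain rfl : M = M' := Matrix.ext fun i j ↦ sub_eq_zero.mp (zero_dvd_iff.mp (hMM' i j))
    exact ⟨LinearEquiv.refl R _⟩
  have hfinrank : Module.finrank R ((ι → R) ⧸ LinearMap.range M.mulVecLin) =
      Module.finrank R ((ι → R) ⧸ LinearMap.range M'.mulVecLin) := by
    have := finrank_coker_add_rank M
    have := finrank_coker_add_rank M'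
    rw [rank_map_algebraMap, rank_map_algebraMap] at hrank
    omega
  obtain ⟨e⟩ := nonempty_quotSMulTop_coker_linearEquiv (mulVecLin_sub_mem_smul_top hMM')
  exact nonempty_linearEquiv_of_quotSMulTop_linearEquiv ha hfinrank hQ hQ' e

theorem statement10 (p : ℕ) [Fact p.Prime] (N n m : ℕ)
    (M M' : Matrix (Fin n) (Fin m) ℤ_[p])
    (hMM' : ∀ i j, (p : ℤ_[p]) ^ N ∣ (M i j - M' i j))
    (hrank : (M.map (PadicInt.Coe.ringHom : ℤ_[p] →+* ℚ_[p])).rank =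
      (M'.map (PadicInt.Coe.ringHom : ℤ_[p] →+* ℚ_[p])).rank)
    (hQ : ∀ x ∈ Submodule.torsion ℤ_[p]
        ((Fin n → ℤ_[p]) ⧸ LinearMap.range (Matrix.mulVecLin M)),
      (p : ℤ_[p]) ^ N • x = 0)
    (hQ' : ∀ x ∈ Submodule.torsion ℤ_[p]
        ((Fin n → ℤ_[p]) ⧸ LinearMap.range (Matrix.mulVecLin M')),
      (p : ℤ_[p]) ^ N • x = 0) :
    Nonempty (((Fin n → ℤ_[p]) ⧸ LinearMap.range (Matrix.mulVecLin M)) ≃ₗ[ℤ_[p]]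
      ((Fin n → ℤ_[p]) ⧸ LinearMap.range (Matrix.mulVecLin M'))) :=
  statement10_general (K := ℚ_[p]) _ M M' hMM' hrank hQ hQ'
end
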